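/- Let c ≥ 0 and consider the uniform weights w = (c/N)𝟙. Then λ₂(L(w)) = 2c/N if and only if for all u₁, u₂ ∈ ℝ^N with u₁ᵀ𝟙 = u₂ᵀ𝟙 = 0 one has u₁ᵀL₁u₁ + u₂ᵀL₂u₂ ≥ (c/N)‖u₁ + u₂‖². -/

import Mathlib

open Matrix

/-- The supra-Laplacian of a two-layer multiplex with layer Laplacians `L₁`, `L₂`
and one-to-one inter-layer weights `w`: the block matrix
`[[L₁ + W, −W], [−W, L₂ + W]]` with `W = diag w`. -/
noncomputable def supraLaplacian {N : ℕ} (L₁ L₂ : Matrix (Fin N) (Fin N) ℝ)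
    (w : Fin N → ℝ) : Matrix (Fin N ⊕ Fin N) (Fin N ⊕ Fin N) ℝ :=
  Matrix.fromBlocks (L₁ + Matrix.diagonal w) (-Matrix.diagonal w)
    (-Matrix.diagonal w) (L₂ + Matrix.diagonal w)

/-- Algebraic connectivity: the minimum of `vᵀ M v` over unit vectors `v`
orthogonal to the all-ones vector (the minimum is attained, so it equals the inf). -/
noncomputable def lambda2 {n : Type*} [Fintype n] (M : Matrix n n ℝ) : ℝ :=
  sInf {x : ℝ | ∃ v : n → ℝ, v ⬝ᵥ v = 1 ∧ v ⬝ᵥ (fun _ => 1) = 0 ∧ x = v ⬝ᵥ M *ᵥ v}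

/-!
Write a vector of the two-layer network as `v = (a, b)`. With uniform weights `k` the quadratic
form of the supra-Laplacian is `aᵀL₁a + bᵀL₂b + k‖a - b‖²`, which by the parallelogram law exceeds
`2k‖v‖²` by `aᵀL₁a + bᵀL₂b - k‖a + b‖²`. This excess vanishes at `(𝟙, -𝟙)`, so `λ₂ = 2k` exactly
when it is nonnegative for all `v` orthogonal to the all-ones vector. It is also unchanged when
`(a, b)` is translated along `(𝟙, -𝟙)`, so one may assume that `a` and `b` are separately
orthogonal to `𝟙`.
-/

section QuadraticForms

variable {n R : Type*} [Fintype n] [CommSemiring R]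

theorem smul_dotProduct_mulVec_smul (M : Matrix n n R) (s : R) (v : n → R) :
    (s • v) ⬝ᵥ M *ᵥ (s • v) = s ^ 2 * (v ⬝ᵥ M *ᵥ v) := by
  rw [mulVec_smul, smul_dotProduct, dotProduct_smul, smul_eq_mul, smul_eq_mul]
  ring

theorem dotProduct_mulVec_add_smul_of_mulVec_eq_zero {L : Matrix n n R} {x : n → R}
    (hLx : L *ᵥ x = 0) (hxL : x ᵥ* L = 0) (a : n → R) (t : R) :
    (a + t • x) ⬝ᵥ L *ᵥ (a + t • x) = a ⬝ᵥ L *ᵥ a := by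
  have hx : x ⬝ᵥ L *ᵥ a = 0 := by rw [dotProduct_mulVec, hxL, zero_dotProduct]
  rw [mulVec_add, mulVec_smul, hLx, smul_zero, add_zero, add_dotProduct, smul_dotProduct, hx,
    smul_zero, add_zero]

theorem vecMul_eq_zero_of_isHermitian [StarRing R] [TrivialStar R] {L : Matrix n n R}
    (hL : L.IsHermitian) {x : n → R} (hx : L *ᵥ x = 0) : x ᵥ* L = 0 := by
  rw [← mulVec_transpose, ← conjTranspose_eq_transpose_of_trivial, hL.eq, hx]

theorem exists_add_smul_one_dotProduct_one_eq_zero {K : Type*} [Field K] [CharZero K] [Nonempty n]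
    (a : n → K) : ∃ t : K, (a + t • 1) ⬝ᵥ 1 = 0 := by
  have hcard : (Fintype.card n : K) ≠ 0 := Nat.cast_ne_zero.2 Fintype.card_ne_zero
  refine ⟨-(a ⬝ᵥ 1) / Fintype.card n, ?_⟩
  rw [add_dotProduct, smul_dotProduct, one_dotProduct_one, smul_eq_mul, div_mul_cancel₀ _ hcard,
    add_neg_cancel]

end QuadraticForms

section AlgebraicConnectivity

variable {n : Type*} [Fintype n]

theorem dotProduct_self_pos {v : n → ℝ} (hv : v ≠ 0) : 0 < v ⬝ᵥ v := by
  simpa only [star_trivial] using dotProduct_star_self_pos_iff.2 hv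

theorem exists_smul_dotProduct_smul_eq_one {v : n → ℝ} (hv : v ≠ 0) :
    ∃ s : ℝ, (s • v) ⬝ᵥ (s • v) = 1 := by
  refine ⟨(√(v ⬝ᵥ v))⁻¹, ?_⟩
  rw [smul_dotProduct, dotProduct_smul, smul_eq_mul, smul_eq_mul, ← mul_assoc, ← mul_inv,
    Real.mul_self_sqrt (dotProduct_self_pos hv).le, inv_mul_cancel₀ (dotProduct_self_pos hv).ne']

theorem isCompact_setOf_dotProduct_self_eq_one : IsCompact {v : n → ℝ | v ⬝ᵥ v = 1} := by
  have hclosed : IsClosed {v : n → ℝ | v ⬝ᵥ v = 1} :=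
    isClosed_eq (by fun_prop) continuous_const
  refine (isCompact_Icc (a := (-1 : n → ℝ)) (b := 1)).of_isClosed_subset hclosed fun v hv => ?_
  have hcoord (i : n) : |v i| ≤ 1 := by
    rw [← sq_le_one_iff_abs_le_one, sq, ← hv.out]
    exact Finset.single_le_sum (f := fun j => v j * v j) (fun j _ => mul_self_nonneg (v j))
      (Finset.mem_univ i)
  exact ⟨fun i => (abs_le.1 (hcoord i)).1, fun i => (abs_le.1 (hcoord i)).2⟩

theorem lambda2_le (M : Matrix n n ℝ) {v : n → ℝ} (hv : v ⬝ᵥ v = 1) (hv1 : v ⬝ᵥ 1 = 0) :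
    lambda2 M ≤ v ⬝ᵥ M *ᵥ v := by
  have hcont : Continuous fun v : n → ℝ => v ⬝ᵥ M *ᵥ v := by fun_prop
  have hbdd := isCompact_setOf_dotProduct_self_eq_one.bddBelow_image hcont.continuousOn
  refine csInf_le (hbdd.mono ?_) ⟨v, hv, hv1, rfl⟩
  rintro _ ⟨u, hu, -, rfl⟩
  exact ⟨u, hu, rfl⟩

theorem lambda2_mul_dotProduct_self_le (M : Matrix n n ℝ) {v : n → ℝ} (hv1 : v ⬝ᵥ 1 = 0) :
    lambda2 M * (v ⬝ᵥ v) ≤ v ⬝ᵥ M *ᵥ v := by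
  rcases eq_or_ne v 0 with rfl | hv
  · simp
  obtain ⟨s, hs⟩ := exists_smul_dotProduct_smul_eq_one hv
  have hle : lambda2 M ≤ s ^ 2 * (v ⬝ᵥ M *ᵥ v) := by
    rw [← smul_dotProduct_mulVec_smul]
    exact lambda2_le M hs (by rw [smul_dotProduct, hv1, smul_zero])
  have hs' : s ^ 2 * (v ⬝ᵥ v) = 1 := by
    rw [← hs, smul_dotProduct, dotProduct_smul, smul_eq_mul, smul_eq_mul]
    ring
  calc lambda2 M * (v ⬝ᵥ v) ≤ s ^ 2 * (v ⬝ᵥ M *ᵥ v) * (v ⬝ᵥ v) :=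
        mul_le_mul_of_nonneg_right hle (dotProduct_self_pos hv).le
    _ = v ⬝ᵥ M *ᵥ v := by rw [mul_right_comm, hs', one_mul]

theorem le_lambda2 {M : Matrix n n ℝ} {μ : ℝ} {v₀ : n → ℝ} (hv₀ : v₀ ≠ 0) (hv₀1 : v₀ ⬝ᵥ 1 = 0)
    (h : ∀ v : n → ℝ, v ⬝ᵥ 1 = 0 → μ * (v ⬝ᵥ v) ≤ v ⬝ᵥ M *ᵥ v) : μ ≤ lambda2 M := by
  obtain ⟨s, hs⟩ := exists_smul_dotProduct_smul_eq_one hv₀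
  refine le_csInf ⟨_, s • v₀, hs, ?_, rfl⟩ ?_
  · exact (smul_dotProduct s v₀ 1).trans (by rw [hv₀1, smul_zero])
  · rintro _ ⟨v, hv, hv1, rfl⟩
    simpa only [hv, mul_one] using h v hv1

theorem lambda2_eq_iff_of_dotProduct_mulVec_eq {M : Matrix n n ℝ} {μ : ℝ} {v₀ : n → ℝ}
    (hv₀ : v₀ ≠ 0) (hv₀1 : v₀ ⬝ᵥ 1 = 0) (hμ : v₀ ⬝ᵥ M *ᵥ v₀ = μ * (v₀ ⬝ᵥ v₀)) :
    lambda2 M = μ ↔ ∀ v : n → ℝ, v ⬝ᵥ 1 = 0 → μ * (v ⬝ᵥ v) ≤ v ⬝ᵥ M *ᵥ v := by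
  refine ⟨?_, fun h => le_antisymm ?_ (le_lambda2 hv₀ hv₀1 h)⟩
  · rintro rfl v hv1
    exact lambda2_mul_dotProduct_self_le M hv1
  · exact le_of_mul_le_mul_right (hμ ▸ lambda2_mul_dotProduct_self_le M hv₀1)
      (dotProduct_self_pos hv₀)

end AlgebraicConnectivity

section RayleighExcess

variable {n R : Type*} [Fintype n] [CommRing R]

/-- The amount by which the quadratic form of the supra-Laplacian with uniform weights `k` exceeds
`2k‖v‖²` at the vector `v = (a, b)`. -/
def rayleighExcess (L₁ L₂ : Matrix n n R) (k : R) (a b : n → R) : R :=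
  a ⬝ᵥ L₁ *ᵥ a + b ⬝ᵥ L₂ *ᵥ b - k * ((a + b) ⬝ᵥ (a + b))

theorem rayleighExcess_add_smul_one_add_neg_smul_one {L₁ L₂ : Matrix n n R}
    (h₁ : L₁ *ᵥ 1 = 0) (h₁' : 1 ᵥ* L₁ = 0) (h₂ : L₂ *ᵥ 1 = 0) (h₂' : 1 ᵥ* L₂ = 0) (k : R)
    (a b : n → R) (t : R) :
    rayleighExcess L₁ L₂ k (a + t • 1) (b + -t • 1) = rayleighExcess L₁ L₂ k a b := by
  have hsum : a + t • 1 + (b + -t • 1) = a + b := by rw [neg_smul]; abel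
  rw [rayleighExcess, dotProduct_mulVec_add_smul_of_mulVec_eq_zero h₁ h₁',
    dotProduct_mulVec_add_smul_of_mulVec_eq_zero h₂ h₂', hsum, rayleighExcess]

theorem rayleighExcess_one_neg_one {L₁ L₂ : Matrix n n R} (h₁ : L₁ *ᵥ 1 = 0) (h₂ : L₂ *ᵥ 1 = 0)
    (k : R) : rayleighExcess L₁ L₂ k 1 (-1) = 0 := by
  simp [rayleighExcess, mulVec_neg, h₁, h₂]

theorem rayleighExcess_nonneg_of_forall_dotProduct_one_eq_zero {K : Type*} [Field K]
    [LinearOrder K] [IsStrictOrderedRing K] [Nonempty n] {L₁ L₂ : Matrix n n K}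
    (h₁ : L₁ *ᵥ 1 = 0) (h₁' : 1 ᵥ* L₁ = 0) (h₂ : L₂ *ᵥ 1 = 0) (h₂' : 1 ᵥ* L₂ = 0) {k : K}
    (h : ∀ u₁ u₂ : n → K, u₁ ⬝ᵥ 1 = 0 → u₂ ⬝ᵥ 1 = 0 → 0 ≤ rayleighExcess L₁ L₂ k u₁ u₂)
    {a b : n → K} (hab : a ⬝ᵥ 1 + b ⬝ᵥ 1 = 0) : 0 ≤ rayleighExcess L₁ L₂ k a b := by
  obtain ⟨t, ht⟩ := exists_add_smul_one_dotProduct_one_eq_zero a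
  rw [← rayleighExcess_add_smul_one_add_neg_smul_one h₁ h₁' h₂ h₂' k a b t]
  refine h _ _ ht ?_
  rw [add_dotProduct, smul_dotProduct] at ht ⊢
  rw [neg_smul]
  linear_combination hab - ht

end RayleighExcess

section SupraLaplacian

variable {N : ℕ}

theorem sumElim_dotProduct_supraLaplacian_mulVec (L₁ L₂ : Matrix (Fin N) (Fin N) ℝ)
    (w a b : Fin N → ℝ) :
    Sum.elim a b ⬝ᵥ supraLaplacian L₁ L₂ w *ᵥ Sum.elim a b =
      a ⬝ᵥ L₁ *ᵥ a + b ⬝ᵥ L₂ *ᵥ b + (a - b) ⬝ᵥ diagonal w *ᵥ (a - b) := by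
  rw [supraLaplacian, fromBlocks_mulVec, Sum.elim_comp_inl, Sum.elim_comp_inr,
    sumElim_dotProduct_sumElim]
  simp only [add_mulVec, neg_mulVec, mulVec_sub, dotProduct_add, dotProduct_sub, dotProduct_neg,
    sub_dotProduct]
  ring

theorem sumElim_dotProduct_supraLaplacian_const_mulVec (L₁ L₂ : Matrix (Fin N) (Fin N) ℝ)
    (k : ℝ) (a b : Fin N → ℝ) :
    Sum.elim a b ⬝ᵥ supraLaplacian L₁ L₂ (fun _ => k) *ᵥ Sum.elim a b =
      2 * k * (Sum.elim a b ⬝ᵥ Sum.elim a b) + rayleighExcess L₁ L₂ k a b := by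
  have hdiag (x : Fin N → ℝ) : diagonal (fun _ => k) *ᵥ x = k • x := by
    rw [← smul_one_eq_diagonal, smul_mulVec, one_mulVec]
  have parallelogram : (a + b) ⬝ᵥ (a + b) + (a - b) ⬝ᵥ (a - b) = 2 * (a ⬝ᵥ a + b ⬝ᵥ b) := by
    simp only [add_dotProduct, dotProduct_add, sub_dotProduct, dotProduct_sub]
    ring
  rw [sumElim_dotProduct_supraLaplacian_mulVec, hdiag, dotProduct_smul, smul_eq_mul,
    sumElim_dotProduct_sumElim, rayleighExcess]
  linear_combination k * parallelogram

theorem lambda2_supraLaplacian_const_eq_iff [NeZero N] {L₁ L₂ : Matrix (Fin N) (Fin N) ℝ}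
    (h₁ : L₁ *ᵥ 1 = 0) (h₂ : L₂ *ᵥ 1 = 0) (k : ℝ) :
    lambda2 (supraLaplacian L₁ L₂ fun _ => k) = 2 * k ↔
      ∀ a b : Fin N → ℝ, a ⬝ᵥ 1 + b ⬝ᵥ 1 = 0 → 0 ≤ rayleighExcess L₁ L₂ k a b := by
  have dotProduct_one_eq (a b : Fin N → ℝ) : Sum.elim a b ⬝ᵥ 1 = a ⬝ᵥ 1 + b ⬝ᵥ 1 := by
    rw [← Sum.elim_one_one, sumElim_dotProduct_sumElim]
  have antiphase_ne_zero : Sum.elim (1 : Fin N → ℝ) (-1 : Fin N → ℝ) ≠ 0 := fun h =>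
    one_ne_zero (congrFun h (Sum.inl 0))
  have antiphase_orthogonal : Sum.elim (1 : Fin N → ℝ) (-1 : Fin N → ℝ) ⬝ᵥ 1 = 0 := by
    rw [dotProduct_one_eq, neg_dotProduct, add_neg_cancel]
  have rayleigh_antiphase := sumElim_dotProduct_supraLaplacian_const_mulVec L₁ L₂ k 1 (-1)
  rw [rayleighExcess_one_neg_one h₁ h₂, add_zero] at rayleigh_antiphase
  rw [lambda2_eq_iff_of_dotProduct_mulVec_eq antiphase_ne_zero antiphase_orthogonal
    rayleigh_antiphase]
  constructor
  · intro h a b hab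
    have hv := h (Sum.elim a b) (by rwa [dotProduct_one_eq])
    rwa [sumElim_dotProduct_supraLaplacian_const_mulVec, le_add_iff_nonneg_right] at hv
  · intro h v hv
    rw [← Sum.elim_comp_inl_inr v] at hv ⊢
    rw [sumElim_dotProduct_supraLaplacian_const_mulVec, le_add_iff_nonneg_right]
    exact h _ _ (by rwa [dotProduct_one_eq] at hv)

end SupraLaplacian

theorem stmt7_general {N : ℕ} (hN : 1 ≤ N) {L₁ L₂ : Matrix (Fin N) (Fin N) ℝ}
    (h₁ : L₁ *ᵥ 1 = 0) (h₁' : 1 ᵥ* L₁ = 0) (h₂ : L₂ *ᵥ 1 = 0) (h₂' : 1 ᵥ* L₂ = 0) (k : ℝ) :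
    lambda2 (supraLaplacian L₁ L₂ fun _ => k) = 2 * k ↔
      ∀ u₁ u₂ : Fin N → ℝ, u₁ ⬝ᵥ 1 = 0 → u₂ ⬝ᵥ 1 = 0 →
        u₁ ⬝ᵥ L₁ *ᵥ u₁ + u₂ ⬝ᵥ L₂ *ᵥ u₂ ≥ k * ((u₁ + u₂) ⬝ᵥ (u₁ + u₂)) := by
  have : NeZero N := ⟨Nat.one_le_iff_ne_zero.1 hN⟩
  rw [lambda2_supraLaplacian_const_eq_iff h₁ h₂]
  constructor
  · intro h u₁ u₂ hu₁ hu₂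
    exact sub_nonneg.1 (h u₁ u₂ (by rw [hu₁, hu₂, add_zero]))
  · intro h a b hab
    exact rayleighExcess_nonneg_of_forall_dotProduct_one_eq_zero h₁ h₁' h₂ h₂'
      (fun u₁ u₂ hu₁ hu₂ => sub_nonneg.2 (h u₁ u₂ hu₁ hu₂)) hab

theorem stmt7 {N : ℕ} (hN : 1 ≤ N)
    (L₁ L₂ : Matrix (Fin N) (Fin N) ℝ)
    (hL₁ : L₁.PosSemidef) (hL₂ : L₂.PosSemidef)
    (hL₁1 : L₁ *ᵥ (fun _ => 1) = 0) (hL₂1 : L₂ *ᵥ (fun _ => 1) = 0)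
    (c : ℝ) (hc : 0 ≤ c) :
    lambda2 (supraLaplacian L₁ L₂ (fun _ => c / N)) = 2 * c / N ↔
      (∀ u₁ u₂ : Fin N → ℝ, u₁ ⬝ᵥ (fun _ => 1) = 0 → u₂ ⬝ᵥ (fun _ => 1) = 0 →
        u₁ ⬝ᵥ L₁ *ᵥ u₁ + u₂ ⬝ᵥ L₂ *ᵥ u₂ ≥ (c / N) * ((u₁ + u₂) ⬝ᵥ (u₁ + u₂))) := by
  rw [mul_div_assoc]
  exact stmt7_general hN hL₁1 (vecMul_eq_zero_of_isHermitian hL₁.isHermitian hL₁1)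
    hL₂1 (vecMul_eq_zero_of_isHermitian hL₂.isHermitian hL₂1) (c / N)
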